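/- Let M be an R-module of finite Gorenstein weak injective dimension. Then M is Gorenstein weak injective if and only if every GWI-copure exact sequence 0 → M → N → L → 0 splits, if and only if Hom_R(−, M) is exact on every GWI-copure exact sequence. -/

import Mathlib

open CategoryTheory

universe u

noncomputable section

variable (R : Type u) [Ring R]

/-- Vanishing of `Ext^n_R(N, M)` for left `R`-modules, expressed via the `Ext` bifunctor
on the `ℤ`-linear abelian category `ModuleCat R`. -/
def ExtVanish (n : ℕ) (N M : ModuleCat.{u} R) : Prop :=
  Subsingleton (((_root_.Ext ℤ (ModuleCat.{u} R) n).obj (Opposite.op N)).obj M)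

/-- An `R`-module is super finitely presented if it admits a resolution by
finitely generated projective modules. -/
def SuperFinitelyPresented (N : ModuleCat.{u} R) : Prop :=
  ∃ (F : ℕ → ModuleCat.{u} R) (d : ∀ n, F (n + 1) →ₗ[R] F n) (ε : F 0 →ₗ[R] N),
    (∀ n, Module.Finite R (F n)) ∧ (∀ n, Module.Projective R (F n)) ∧
    Function.Surjective ε ∧ Function.Exact (d 0) ε ∧
    (∀ n, Function.Exact (d (n + 1)) (d n))

/-- An `R`-module `W` is weak injective if `Ext^1_R(N, W) = 0` for every super finitely
presented module `N`. -/
def WeakInjective (W : ModuleCat.{u} R) : Prop :=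
  ∀ N : ModuleCat.{u} R, SuperFinitelyPresented R N → ExtVanish R 1 N W

/-- `wid_R M ≤ n` : `Ext^{n+1}_R(N, M) = 0` for every super finitely presented `N`. -/
def WidLE (M : ModuleCat.{u} R) (n : ℕ) : Prop :=
  ∀ N : ModuleCat.{u} R, SuperFinitelyPresented R N → ExtVanish R (n + 1) N M

/-- The weak injective dimension, as an element of `ℕ∞`. -/
def Wid (M : ModuleCat.{u} R) : ℕ∞ :=
  sInf {c : ℕ∞ | ∃ n : ℕ, c = n ∧ WidLE R M n}

/-- A doubly infinite exact complex of injective modules which stays exact after applying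
`Hom_R(W, -)` for every module `W` in the test class `𝒯`. -/
def IsTotallyAcyclicInjComplex (𝒯 : ModuleCat.{u} R → Prop)
    (I : ℤ → ModuleCat.{u} R) (d : ∀ n : ℤ, I n →ₗ[R] I (n + 1)) : Prop :=
  (∀ n, Module.Injective R (I n)) ∧
  (∀ n, Function.Exact (d n) (d (n + 1))) ∧
  (∀ W : ModuleCat.{u} R, 𝒯 W → ∀ n,
    Function.Exact (fun g : W →ₗ[R] I n => (d n).comp g)
      (fun g : W →ₗ[R] I (n + 1) => (d (n + 1)).comp g))

/-- `M` is Gorenstein injective relative to the test class `𝒯` : `M` is the cokernel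
`Coker (I_1 → I_0)` of a `Hom(𝒯, -)`-exact exact complex of injective modules. -/
def GorensteinRelInjective (𝒯 : ModuleCat.{u} R → Prop) (M : ModuleCat.{u} R) : Prop :=
  ∃ (I : ℤ → ModuleCat.{u} R) (d : ∀ n : ℤ, I n →ₗ[R] I (n + 1)) (π : I 0 →ₗ[R] M),
    IsTotallyAcyclicInjComplex R 𝒯 I d ∧
    Function.Surjective π ∧ Function.Exact (d (-1)) π

/-- Gorenstein weak injective modules: the test class is that of weak injective modules. -/
def GorensteinWeakInjective (M : ModuleCat.{u} R) : Prop :=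
  GorensteinRelInjective R (WeakInjective R) M

/-- Gorenstein injective modules: the test class is that of injective modules. -/
def GorensteinInjective (M : ModuleCat.{u} R) : Prop :=
  GorensteinRelInjective R (fun E => Module.Injective R E) M

/-- The data of an exact sequence `0 → M → G^0 → ⋯ → G^n → 0` (the modules `G^i` for
`i > n` being trivial). -/
def IsFiniteCoresolution (M : ModuleCat.{u} R) (n : ℕ) (G : ℕ → ModuleCat.{u} R)
    (d : ∀ i, G i →ₗ[R] G (i + 1)) (ε : M →ₗ[R] G 0) : Prop :=
  Function.Injective ε ∧ Function.Exact ε (d 0) ∧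
  (∀ i, Function.Exact (d i) (d (i + 1))) ∧
  (∀ i, n < i → ∀ x : G i, x = 0)

/-- `Gwid_R M ≤ n` : `M` has a coresolution of length `n` by Gorenstein weak injective
modules. -/
def GwidLE (M : ModuleCat.{u} R) (n : ℕ) : Prop :=
  ∃ (G : ℕ → ModuleCat.{u} R) (d : ∀ i, G i →ₗ[R] G (i + 1)) (ε : M →ₗ[R] G 0),
    IsFiniteCoresolution R M n G d ε ∧ ∀ i, GorensteinWeakInjective R (G i)

/-- The Gorenstein weak injective dimension, as an element of `ℕ∞`. -/
def Gwid (M : ModuleCat.{u} R) : ℕ∞ :=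
  sInf {c : ℕ∞ | ∃ n : ℕ, c = n ∧ GwidLE R M n}

/-- `Gid_R M ≤ n`, via coresolutions by Gorenstein injective modules. -/
def GidLE (M : ModuleCat.{u} R) (n : ℕ) : Prop :=
  ∃ (G : ℕ → ModuleCat.{u} R) (d : ∀ i, G i →ₗ[R] G (i + 1)) (ε : M →ₗ[R] G 0),
    IsFiniteCoresolution R M n G d ε ∧ ∀ i, GorensteinInjective R (G i)

/-- The Gorenstein injective dimension, as an element of `ℕ∞`. -/
def Gid (M : ModuleCat.{u} R) : ℕ∞ :=
  sInf {c : ℕ∞ | ∃ n : ℕ, c = n ∧ GidLE R M n}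

/-- `id_R M ≤ n`, via coresolutions by injective modules. -/
def IdLE (M : ModuleCat.{u} R) (n : ℕ) : Prop :=
  ∃ (G : ℕ → ModuleCat.{u} R) (d : ∀ i, G i →ₗ[R] G (i + 1)) (ε : M →ₗ[R] G 0),
    IsFiniteCoresolution R M n G d ε ∧ ∀ i, Module.Injective R (G i)

/-- The injective dimension, as an element of `ℕ∞`. -/
def Idim (M : ModuleCat.{u} R) : ℕ∞ :=
  sInf {c : ℕ∞ | ∃ n : ℕ, c = n ∧ IdLE R M n}

/-- The data of an exact sequence `0 → P_n → ⋯ → P_0 → M → 0`. -/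
def IsFiniteResolution (M : ModuleCat.{u} R) (n : ℕ) (P : ℕ → ModuleCat.{u} R)
    (d : ∀ i, P (i + 1) →ₗ[R] P i) (ε : P 0 →ₗ[R] M) : Prop :=
  Function.Surjective ε ∧ Function.Exact (d 0) ε ∧
  (∀ i, Function.Exact (d (i + 1)) (d i)) ∧
  (∀ i, n < i → ∀ x : P i, x = 0)

/-- `pd_R M ≤ n`, via resolutions by projective modules. -/
def PdLE (M : ModuleCat.{u} R) (n : ℕ) : Prop :=
  ∃ (P : ℕ → ModuleCat.{u} R) (d : ∀ i, P (i + 1) →ₗ[R] P i) (ε : P 0 →ₗ[R] M),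
    IsFiniteResolution R M n P d ε ∧ ∀ i, Module.Projective R (P i)

end

variable (R : Type u) [Ring R]

/-- A short exact sequence `0 → L → M → N → 0` of `R`-modules. -/
def ShortExactSeq (L M N : ModuleCat.{u} R) (f : L →ₗ[R] M) (g : M →ₗ[R] N) : Prop :=
  Function.Injective f ∧ Function.Surjective g ∧ Function.Exact f g

/-- Exactness of `0 → Hom(C, X) → Hom(B, X) → Hom(A, X) → 0` induced by
`0 → A → B → C → 0`. -/
def HomContraExact (X : ModuleCat.{u} R) {A B C : ModuleCat.{u} R}
    (f : A →ₗ[R] B) (g : B →ₗ[R] C) : Prop :=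
  Function.Injective (fun h : C →ₗ[R] X => h.comp g) ∧
  Function.Exact (fun h : C →ₗ[R] X => h.comp g) (fun h : B →ₗ[R] X => h.comp f) ∧
  Function.Surjective (fun h : B →ₗ[R] X => h.comp f)

/-- A short exact sequence is `GWI`-copure exact if `Hom_R(-, X)` leaves it exact for
every Gorenstein weak injective module `X`. -/
def GWICopureExact {A B C : ModuleCat.{u} R} (f : A →ₗ[R] B) (g : B →ₗ[R] C) : Prop :=
  ShortExactSeq R A B C f g ∧
  ∀ X : ModuleCat.{u} R, GorensteinWeakInjective R X → HomContraExact R X f g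

/-- `M` is `GWI`-copure injective if `Hom_R(-, M)` is exact on every `GWI`-copure exact
sequence. -/
def GWICopureInjectiveMod (M : ModuleCat.{u} R) : Prop :=
  ∀ (A B C : ModuleCat.{u} R) (f : A →ₗ[R] B) (g : B →ₗ[R] C),
    GWICopureExact R f g → HomContraExact R M f g

/-- `φ : M → G` is a Gorenstein weak injective preenvelope of `M`. -/
def GWIPreenvelope (M G : ModuleCat.{u} R) (φ : M →ₗ[R] G) : Prop :=
  GorensteinWeakInjective R G ∧
  ∀ G' : ModuleCat.{u} R, GorensteinWeakInjective R G' →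
    ∀ f : M →ₗ[R] G', ∃ g : G →ₗ[R] G', g.comp φ = f

/-- A `WI`-pure Tate injective resolution of `M` : an injective resolution
`0 → M → E^0 → E^1 → ⋯`, a `WI`-pure exact complex `T` of injectives, and a chain map
`u : E → T` which is an isomorphism in all sufficiently large degrees. -/
def WIPureTateInjectiveResolution (M : ModuleCat.{u} R)
    (E : ℕ → ModuleCat.{u} R) (dE : ∀ n, E n →ₗ[R] E (n + 1)) (ε : M →ₗ[R] E 0)
    (T : ℤ → ModuleCat.{u} R) (dT : ∀ n : ℤ, T n →ₗ[R] T (n + 1))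
    (u : ∀ n : ℕ, E n →ₗ[R] T n) : Prop :=
  (∀ n, Module.Injective R (E n)) ∧ Function.Injective ε ∧
  Function.Exact ε (dE 0) ∧ (∀ n, Function.Exact (dE n) (dE (n + 1))) ∧
  IsTotallyAcyclicInjComplex R (WeakInjective R) T dT ∧
  (∀ n : ℕ, (dT n).comp (u n) = (u (n + 1)).comp (dE n)) ∧
  ∃ N : ℕ, ∀ n, N ≤ n → Function.Bijective (u n)

/-- Vanishing of the relative Tate cohomology `Êxt^i_GWI(N, M)` for all `i ∈ ℤ`,
computed from the `WI`-pure exact complex `T` : the complex `Hom_R(N, T)` is exact. -/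
def ExtHatVanishesAll (N : ModuleCat.{u} R) (T : ℤ → ModuleCat.{u} R)
    (dT : ∀ n : ℤ, T n →ₗ[R] T (n + 1)) : Prop :=
  ∀ n : ℤ, Function.Exact (fun g : N →ₗ[R] T n => (dT n).comp g)
    (fun g : N →ₗ[R] T (n + 1) => (dT (n + 1)).comp g)

section ExtLemmas

variable {R}

lemma ShortExactSeq.comp_eq_zero {A B C : ModuleCat.{u} R} {f : A →ₗ[R] B} {g : B →ₗ[R] C}
    (h : ShortExactSeq R A B C f g) : g.comp f = 0 :=
  LinearMap.ext fun x => h.2.2.apply_apply_eq_zero x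

lemma ShortExactSeq.shortExact {A B C : ModuleCat.{u} R} {f : A →ₗ[R] B} {g : B →ₗ[R] C}
    (h : ShortExactSeq R A B C f g) :
    (ShortComplex.moduleCatMk f g h.comp_eq_zero).ShortExact :=
  ShortComplex.ShortExact.mk'
    ((ShortComplex.ShortExact.moduleCat_exact_iff_function_exact _).mpr h.2.2)
    ((ModuleCat.mono_iff_injective _).mpr h.1) ((ModuleCat.epi_iff_surjective _).mpr h.2.1)

lemma ShortExactSeq.ext_middle {A B C : ModuleCat.{u} R} {f : A →ₗ[R] B} {g : B →ₗ[R] C}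
    (h : ShortExactSeq R A B C f g) (W : ModuleCat.{u} R) (n : ℕ)
    (hA : Subsingleton (Abelian.Ext W A n)) (hC : Subsingleton (Abelian.Ext W C n)) :
    Subsingleton (Abelian.Ext W B n) := by
  refine subsingleton_of_forall_eq 0 fun x => ?_
  obtain ⟨y, rfl⟩ := Abelian.Ext.covariant_sequence_exact₂ W h.shortExact x
    (hC.elim _ _)
  rw [show y = 0 from hA.elim _ _, Abelian.Ext.zero_comp]
  rfl

lemma ShortExactSeq.ext_succ_left {A B C : ModuleCat.{u} R} {f : A →ₗ[R] B} {g : B →ₗ[R] C}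
    (h : ShortExactSeq R A B C f g) (W : ModuleCat.{u} R) (n : ℕ)
    (hC : Subsingleton (Abelian.Ext W C n)) (hB : Subsingleton (Abelian.Ext W B (n + 1))) :
    Subsingleton (Abelian.Ext W A (n + 1)) := by
  refine subsingleton_of_forall_eq 0 fun x => ?_
  obtain ⟨y, rfl⟩ := Abelian.Ext.covariant_sequence_exact₁ W h.shortExact x
    (hB.elim _ _) rfl
  rw [show y = 0 from hC.elim _ _, Abelian.Ext.zero_comp]
  rfl

lemma ShortExactSeq.ext_right {A B C : ModuleCat.{u} R} {f : A →ₗ[R] B} {g : B →ₗ[R] C}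
    (h : ShortExactSeq R A B C f g) (W : ModuleCat.{u} R) (n : ℕ)
    (hB : Subsingleton (Abelian.Ext W B n)) (hA : Subsingleton (Abelian.Ext W A (n + 1))) :
    Subsingleton (Abelian.Ext W C n) := by
  refine subsingleton_of_forall_eq 0 fun x => ?_
  obtain ⟨y, rfl⟩ := Abelian.Ext.covariant_sequence_exact₃ W h.shortExact x rfl
    (hA.elim _ _)
  rw [show y = 0 from hB.elim _ _, Abelian.Ext.zero_comp]
  rfl

lemma ShortExactSeq.ext_one_left {A B C : ModuleCat.{u} R} {f : A →ₗ[R] B} {g : B →ₗ[R] C}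
    (h : ShortExactSeq R A B C f g) (W : ModuleCat.{u} R)
    (hg : ∀ k : W →ₗ[R] C, ∃ l : W →ₗ[R] B, g.comp l = k)
    (hB : Subsingleton (Abelian.Ext W B 1)) :
    Subsingleton (Abelian.Ext W A 1) := by
  refine subsingleton_of_forall_eq 0 fun x => ?_
  obtain ⟨y, rfl⟩ := Abelian.Ext.covariant_sequence_exact₁ W h.shortExact x
    (hB.elim _ _) rfl
  obtain ⟨k, rfl⟩ := Abelian.Ext.mk₀_bijective _ _ |>.2 y
  obtain ⟨l, rfl⟩ : ∃ l, l ≫ (ShortComplex.moduleCatMk f g h.comp_eq_zero).g = k :=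
    (hg k.hom).elim fun l hl => ⟨ModuleCat.ofHom l, ModuleCat.hom_ext hl⟩
  rw [ ← Abelian.Ext.mk₀_comp_mk₀, Abelian.Ext.comp_assoc_of_second_deg_zero,
    h.shortExact.comp_extClass, Abelian.Ext.comp_zero]
  rfl

lemma ShortExactSeq.exists_lift {A B C : ModuleCat.{u} R} {f : A →ₗ[R] B} {g : B →ₗ[R] C}
    (h : ShortExactSeq R A B C f g) (W : ModuleCat.{u} R)
    (hA : Subsingleton (Abelian.Ext W A 1)) (k : W →ₗ[R] C) :
    ∃ l : W →ₗ[R] B, g.comp l = k := by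
  obtain ⟨y, hy⟩ := Abelian.Ext.covariant_sequence_exact₃ W h.shortExact
    (Abelian.Ext.mk₀ (ModuleCat.ofHom k)) rfl (hA.elim _ _)
  obtain ⟨l, rfl⟩ := Abelian.Ext.mk₀_bijective _ _ |>.2 y
  rw [Abelian.Ext.mk₀_comp_mk₀] at hy
  exact ⟨l.hom, congrArg ModuleCat.Hom.hom (Abelian.Ext.mk₀_bijective _ _ |>.1 hy)⟩

lemma ShortExactSeq.exists_extend {A B C : ModuleCat.{u} R} {f : A →ₗ[R] B} {g : B →ₗ[R] C}
    (h : ShortExactSeq R A B C f g) (X : ModuleCat.{u} R)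
    (hC : Subsingleton (Abelian.Ext C X 1)) (k : A →ₗ[R] X) :
    ∃ l : B →ₗ[R] X, l.comp f = k := by
  obtain ⟨y, hy⟩ := Abelian.Ext.contravariant_sequence_exact₁ h.shortExact X
    (Abelian.Ext.mk₀ (ModuleCat.ofHom k)) rfl (hC.elim _ _)
  obtain ⟨l, rfl⟩ := Abelian.Ext.mk₀_bijective _ _ |>.2 y
  rw [Abelian.Ext.mk₀_comp_mk₀] at hy
  exact ⟨l.hom, congrArg ModuleCat.Hom.hom (Abelian.Ext.mk₀_bijective _ _ |>.1 hy)⟩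

lemma ShortExactSeq.ext_contra_left {A B C : ModuleCat.{u} R} {f : A →ₗ[R] B} {g : B →ₗ[R] C}
    (h : ShortExactSeq R A B C f g) (X : ModuleCat.{u} R) (n : ℕ)
    (hB : Subsingleton (Abelian.Ext B X n)) (hC : Subsingleton (Abelian.Ext C X (n + 1))) :
    Subsingleton (Abelian.Ext A X n) := by
  refine subsingleton_of_forall_eq 0 fun x => ?_
  obtain ⟨y, rfl⟩ := Abelian.Ext.contravariant_sequence_exact₁ h.shortExact X x
    (Nat.add_comm 1 n) (hC.elim _ _)
  rw [show y = 0 from hB.elim _ _, Abelian.Ext.comp_zero]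
  rfl

lemma ext_subsingleton_of_retract {M G : ModuleCat.{u} R} (f : M →ₗ[R] G) (r : G →ₗ[R] M)
    (hr : r.comp f = LinearMap.id) (W : ModuleCat.{u} R) (n : ℕ)
    (hG : Subsingleton (Abelian.Ext W G n)) : Subsingleton (Abelian.Ext W M n) := by
  refine subsingleton_of_forall_eq 0 fun x => ?_
  have h : ModuleCat.ofHom f ≫ ModuleCat.ofHom r = 𝟙 M := ModuleCat.hom_ext hr
  rw [← Abelian.Ext.comp_mk₀_id x, ← h, ← Abelian.Ext.mk₀_comp_mk₀,
    ← Abelian.Ext.comp_assoc_of_third_deg_zero, hG.elim (x.comp _ _) 0, Abelian.Ext.zero_comp]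

lemma ext_subsingleton_of_injective (W E : ModuleCat.{u} R) [Module.Injective R E] (n : ℕ) :
    Subsingleton (Abelian.Ext W E (n + 1)) := by
  have : CategoryTheory.Injective E := (Module.injective_iff_injective_object R E).mp ‹_›
  exact Abelian.Ext.subsingleton_of_injective _ _ _

lemma WeakInjective.of_injective {E : ModuleCat.{u} R} (hE : Module.Injective R E) :
    WeakInjective R E := by
  intro N _
  have : CategoryTheory.Injective E := (Module.injective_iff_injective_object R E).mp hE
  let P := ProjectiveResolution.of N
  refine ModuleCat.subsingleton_of_isZero (Limits.IsZero.of_iso ?_ (P.isoExt 1 E))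
  rw [← HomologicalComplex.exactAt_iff_isZero_homology,
    HomologicalComplex.exactAt_iff' _ 0 1 2 (by simp) (by simp), ShortComplex.moduleCat_exact_iff]
  intro (x : P.complex.X 1 ⟶ E) (hx : P.complex.d 2 1 ≫ x = 0)
  have hex : (P.complex.sc' 2 1 0).Exact := by
    rw [← HomologicalComplex.exactAt_iff' _ 2 1 0 (by simp) (by simp)]
    exact P.complex_exactAt_succ 0
  exact ⟨hex.descToInjective x hx, hex.comp_descToInjective x hx⟩

variable (R) in
/-- The modules `X` with `Ext^i_R(W, X) = 0` for all `i ≥ 1` and all weak injective `W`. -/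
def WeakInjectiveAcyclic (X : ModuleCat.{u} R) : Prop :=
  ∀ W : ModuleCat.{u} R, WeakInjective R W → ∀ n : ℕ, Subsingleton (Abelian.Ext W X (n + 1))

lemma WeakInjectiveAcyclic.of_retract {M G : ModuleCat.{u} R} (hG : WeakInjectiveAcyclic R G)
    (f : M →ₗ[R] G) (r : G →ₗ[R] M) (hr : r.comp f = LinearMap.id) :
    WeakInjectiveAcyclic R M :=
  fun W hW n => ext_subsingleton_of_retract f r hr W _ (hG W hW n)

lemma WeakInjectiveAcyclic.exists_cosyzygy {X : ModuleCat.{u} R} (hX : WeakInjectiveAcyclic R X) :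
    ∃ Y : ModuleCat.{u} R, WeakInjectiveAcyclic R Y ∧
      ∃ (E : ModuleCat.{u} R) (f : X →ₗ[R] E) (g : E →ₗ[R] Y),
        Module.Injective R E ∧ ShortExactSeq R X E Y f g := by
  obtain ⟨⟨E, inj, f, _⟩⟩ := EnoughInjectives.presentation X
  have hE : Module.Injective R E := (Module.injective_iff_injective_object R E).mpr inj
  have h : ShortExactSeq R X E (ModuleCat.of R (E ⧸ LinearMap.range f.hom)) f.hom
      (LinearMap.range f.hom).mkQ :=
    ⟨(ModuleCat.mono_iff_injective f).mp inferInstance, Submodule.mkQ_surjective _,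
      LinearMap.exact_map_mkQ_range f.hom⟩
  exact ⟨_, fun W hW n => h.ext_right W _ (ext_subsingleton_of_injective W _ n) (hX W hW (n + 1)),
    _, _, _, hE, h⟩

/-- A biinfinite family of acyclic modules linked by short exact sequences with injective middle
term assembles to a complex exhibiting its members as Gorenstein weak injective modules. -/
lemma GorensteinWeakInjective.of_int_family (Z : ℤ → ModuleCat.{u} R)
    (hZ : ∀ n, WeakInjectiveAcyclic R (Z n))
    (hs : ∀ n, ∃ (E : ModuleCat.{u} R) (f : Z n →ₗ[R] E) (g : E →ₗ[R] Z (n + 1)),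
      Module.Injective R E ∧ ShortExactSeq R (Z n) E (Z (n + 1)) f g) :
    GorensteinWeakInjective R (Z (0 + 1)) := by
  choose I ι π hI hs using hs
  have hex : ∀ n, Function.Exact ((ι (n + 1)).comp (π n)) (π (n + 1)) := fun n x => by
    rw [(hs (n + 1)).2.2 x]
    constructor
    · rintro ⟨y, rfl⟩
      obtain ⟨z, rfl⟩ := (hs n).2.1 y
      exact ⟨z, rfl⟩
    · rintro ⟨z, rfl⟩
      exact ⟨π n z, rfl⟩
  refine ⟨I, fun n => (ι (n + 1)).comp (π n), π 0, ⟨hI, fun n x => ?_, fun W hW n k => ?_⟩,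
    (hs 0).2.1, hex (-1)⟩
  · rw [← hex n x, LinearMap.comp_apply, map_eq_zero_iff _ (hs (n + 1 + 1)).1]
  · constructor
    · intro hk
      have h0 : ∀ w, ∃ z, ι (n + 1) z = k w := fun w => by
        refine ((hs (n + 1)).2.2 (k w)).mp ((hs (n + 1 + 1)).1 ?_)
        rw [map_zero]
        exact LinearMap.congr_fun hk w
      let k' : W →ₗ[R] Z (n + 1) :=
        (LinearEquiv.ofInjective (ι (n + 1)) (hs (n + 1)).1).symm.toLinearMap.comp
          (k.codRestrict (LinearMap.range (ι (n + 1))) h0)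
      obtain ⟨l, hl⟩ := (hs n).exists_lift W (hZ n W hW 0) k'
      refine ⟨l, LinearMap.ext fun w => ?_⟩
      have h1 : ι (n + 1) (k' w) = k w :=
        congrArg Subtype.val ((LinearEquiv.ofInjective (ι (n + 1)) (hs (n + 1)).1).apply_symm_apply
          (k.codRestrict (LinearMap.range (ι (n + 1))) h0 w))
      rw [← h1, ← hl]
      rfl
    · rintro ⟨l, rfl⟩
      refine LinearMap.ext fun w => ?_
      change ι (n + 1 + 1) (π (n + 1) (ι (n + 1) (π n (l w)))) = 0
      rw [(hs (n + 1)).2.2.apply_apply_eq_zero, map_zero]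

/-- Coinduction principle for Gorenstein weak injective modules. -/
lemma GorensteinWeakInjective.of_class (𝒞 : ModuleCat.{u} R → Prop)
    (hac : ∀ X, 𝒞 X → WeakInjectiveAcyclic R X)
    (hcov : ∀ X, 𝒞 X → ∃ (E : ModuleCat.{u} R) (p : E →ₗ[R] X), Module.Injective R E ∧
      Function.Surjective p ∧ 𝒞 (ModuleCat.of R (LinearMap.ker p)))
    {X : ModuleCat.{u} R} (hX : 𝒞 X) : GorensteinWeakInjective R X := by
  let Rel (A B : ModuleCat.{u} R) : Prop :=
    ∃ (E : ModuleCat.{u} R) (f : A →ₗ[R] E) (g : E →ₗ[R] B),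
      Module.Injective R E ∧ ShortExactSeq R A E B f g
  have hnext : ∀ A : {A // WeakInjectiveAcyclic R A},
      ∃ B : {A // WeakInjectiveAcyclic R A}, Rel A.1 B.1 := fun A =>
    A.2.exists_cosyzygy.elim fun B hB => ⟨⟨B, hB.1⟩, hB.2⟩
  have hprev : ∀ B : {A // 𝒞 A}, ∃ A : {A // 𝒞 A}, Rel A.1 B.1 := fun B => by
    obtain ⟨E, p, hE, hp, hK⟩ := hcov B.1 B.2
    exact ⟨⟨_, hK⟩, E, (LinearMap.ker p).subtype, p, hE, Subtype.val_injective, hp,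
      LinearMap.exact_subtype_ker_map p⟩
  choose next hnext using hnext
  choose prev hprev using hprev
  let fwd (k : ℕ) : {A // WeakInjectiveAcyclic R A} := next^[k] ⟨X, hac X hX⟩
  let bwd (k : ℕ) : {A // 𝒞 A} := prev^[k] ⟨X, hX⟩
  have hfwd : ∀ k, Rel (fwd k).1 (fwd (k + 1)).1 := fun k => by
    simp only [fwd, Function.iterate_succ_apply']
    exact hnext _
  have hbwd : ∀ k, Rel (bwd (k + 1)).1 (bwd k).1 := fun k => by
    simp only [bwd, Function.iterate_succ_apply']
    exact hprev _
  let Z : ℤ → ModuleCat.{u} R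
    | Int.ofNat 0 => (bwd 1).1
    | Int.ofNat (k + 1) => (fwd k).1
    | Int.negSucc k => (bwd (k + 2)).1
  refine GorensteinWeakInjective.of_int_family Z ?_ ?_
  · rintro ((_ | k) | k)
    · exact hac _ (bwd 1).2
    · exact (fwd k).2
    · exact hac _ (bwd (k + 2)).2
  · rintro ((_ | k) | (_ | k))
    · exact hbwd 0
    · exact hfwd k
    · exact hbwd 1
    · exact hbwd (k + 2)

lemma GorensteinWeakInjective.acyclic_and_exists_cover {X : ModuleCat.{u} R}
    (hX : GorensteinWeakInjective R X) :
    WeakInjectiveAcyclic R X ∧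
      ∃ (E : ModuleCat.{u} R) (p : E →ₗ[R] X), Module.Injective R E ∧
        Function.Surjective p ∧ GorensteinWeakInjective R (ModuleCat.of R (LinearMap.ker p)) := by
  obtain ⟨I, d, π, ⟨hI, hd, hW⟩, hπ, hπd⟩ := hX
  have hs : ∀ n, ShortExactSeq R (ModuleCat.of R (LinearMap.range (d n))) (I (n + 1))
      (ModuleCat.of R (LinearMap.range (d (n + 1)))) (LinearMap.range (d n)).subtype
      (d (n + 1)).rangeRestrict := fun n =>
    ⟨Subtype.val_injective, LinearMap.surjective_rangeRestrict _, fun x => by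
      rw [← LinearMap.mem_ker, LinearMap.ker_rangeRestrict, LinearMap.mem_ker, hd n x]
      exact ⟨fun h => ⟨⟨x, h⟩, rfl⟩, fun ⟨y, hy⟩ => hy ▸ y.2⟩⟩
  have hac : ∀ n, WeakInjectiveAcyclic R (ModuleCat.of R (LinearMap.range (d n))) := by
    intro n W hWI i
    induction i generalizing n with
    | zero =>
      refine (hs n).ext_one_left W (fun k => ?_) (ext_subsingleton_of_injective _ _ _)
      obtain ⟨l, hl⟩ := (hW W hWI (n + 1) ((LinearMap.range (d (n + 1))).subtype.comp k)).mp
        (LinearMap.ext fun w => (hd (n + 1) _).mpr (k w).2)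
      exact ⟨l, LinearMap.ext fun w => Subtype.ext (LinearMap.congr_fun hl w)⟩
    | succ i ih =>
      exact (hs n).ext_succ_left W _ (ih (n + 1)) (ext_subsingleton_of_injective _ _ _)
  let 𝒞 (A : ModuleCat.{u} R) : Prop := ∃ n, Nonempty (A ≃ₗ[R] LinearMap.range (d n))
  have hac' : ∀ A, 𝒞 A → WeakInjectiveAcyclic R A := fun A ⟨n, ⟨e⟩⟩ =>
    (hac n).of_retract e.toLinearMap e.symm.toLinearMap (LinearMap.ext e.symm_apply_apply)
  have hcov : ∀ A, 𝒞 A → ∃ (E : ModuleCat.{u} R) (p : E →ₗ[R] A), Module.Injective R E ∧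
      Function.Surjective p ∧ 𝒞 (ModuleCat.of R (LinearMap.ker p)) := by
    rintro A ⟨m, ⟨e⟩⟩
    obtain ⟨n, rfl⟩ : ∃ n, m = n + 1 := ⟨m - 1, by omega⟩
    refine ⟨I (n + 1), e.symm.toLinearMap.comp (d (n + 1)).rangeRestrict, hI _,
      e.symm.surjective.comp (LinearMap.surjective_rangeRestrict _), n, ⟨?_⟩⟩
    refine LinearEquiv.ofEq _ _ ?_
    rw [LinearEquiv.ker_comp, LinearMap.ker_rangeRestrict, (hd n).linearMap_ker_eq]
  have hX : 𝒞 X := by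
    refine ⟨0, ⟨(π.quotKerEquivOfSurjective hπ).symm.trans
      ((Submodule.quotEquivOfEq _ _ ?_).trans (d 0).quotKerEquivRange)⟩⟩
    exact hπd.linearMap_ker_eq.trans (hd (-1)).linearMap_ker_eq.symm
  obtain ⟨E, p, hE, hp, hK⟩ := hcov X hX
  exact ⟨hac' X hX, E, p, hE, hp, GorensteinWeakInjective.of_class 𝒞 hac' hcov hK⟩

lemma GorensteinWeakInjective.acyclic {X : ModuleCat.{u} R} (hX : GorensteinWeakInjective R X) :
    WeakInjectiveAcyclic R X :=
  hX.acyclic_and_exists_cover.1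

lemma GorensteinWeakInjective.exists_cover {X : ModuleCat.{u} R}
    (hX : GorensteinWeakInjective R X) :
    ∃ (E : ModuleCat.{u} R) (p : E →ₗ[R] X), Module.Injective R E ∧
      Function.Surjective p ∧ GorensteinWeakInjective R (ModuleCat.of R (LinearMap.ker p)) :=
  hX.acyclic_and_exists_cover.2

lemma GorensteinWeakInjective.of_equiv {X Y : ModuleCat.{u} R} (hX : GorensteinWeakInjective R X)
    (e : X ≃ₗ[R] Y) : GorensteinWeakInjective R Y := by
  obtain ⟨I, d, π, hI, hπ, hπd⟩ := hX
  exact ⟨I, d, e.toLinearMap.comp π, hI, e.surjective.comp hπ,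
    fun x => (map_eq_zero_iff e e.injective).trans (hπd x)⟩

lemma GorensteinWeakInjective.of_shortExactSeq {A B C : ModuleCat.{u} R} {f : A →ₗ[R] B}
    {g : B →ₗ[R] C} (h : ShortExactSeq R A B C f g) (hA : GorensteinWeakInjective R A)
    (hC : GorensteinWeakInjective R C) : GorensteinWeakInjective R B := by
  refine GorensteinWeakInjective.of_class (fun B => ∃ (A C : ModuleCat.{u} R) (f : A →ₗ[R] B)
    (g : B →ₗ[R] C), ShortExactSeq R A B C f g ∧ GorensteinWeakInjective R A ∧
      GorensteinWeakInjective R C) ?_ ?_ ⟨A, C, f, g, h, hA, hC⟩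
  · rintro B ⟨A, C, f, g, h, hA, hC⟩ W hW n
    exact h.ext_middle W _ (hA.acyclic W hW n) (hC.acyclic W hW n)
  · rintro B ⟨A, C, f, g, h, hA, hC⟩
    obtain ⟨E, p, hE, hp, hK⟩ := hA.exists_cover
    obtain ⟨F, q, hF, hq, hL⟩ := hC.exists_cover
    obtain ⟨l, hl⟩ := h.exists_lift F (hA.acyclic F (.of_injective hF) 0) q
    replace hl : ∀ y, g (l y) = q y := LinearMap.congr_fun hl
    have hgf := h.2.2.apply_apply_eq_zero
    let s : E × F →ₗ[R] B := (f.comp p).coprod l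
    have hs : ∀ x y, s (x, y) = f (p x) + l y := fun x y => LinearMap.coprod_apply _ _ _
    have hgs : ∀ z, g (s z) = q z.2 := fun ⟨x, y⟩ => by rw [hs, map_add, hgf, hl, zero_add]
    have key : ∀ y b, q y = g b → ∃ x, s (x, y) = b := fun y b hyb => by
      obtain ⟨a, ha⟩ := (h.2.2 (b - l y)).mp (by rw [map_sub, hl, hyb, sub_self])
      obtain ⟨x, rfl⟩ := hp a
      exact ⟨x, by rw [hs, ha, sub_add_cancel]⟩
    let i : LinearMap.ker p →ₗ[R] LinearMap.ker s :=
      ((LinearMap.inl R E F).comp (LinearMap.ker p).subtype).codRestrict _ fun x => by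
        change s (x.1, 0) = 0
        rw [hs, LinearMap.mem_ker.mp x.2, map_zero, map_zero, zero_add]
    let j : LinearMap.ker s →ₗ[R] LinearMap.ker q :=
      ((LinearMap.snd R E F).comp (LinearMap.ker s).subtype).codRestrict _ fun z => by
        change q z.1.2 = 0
        rw [← hgs, LinearMap.mem_ker.mp z.2, map_zero]
    refine ⟨ModuleCat.of R (E × F), s, ?_, fun b => ?_, _, _, i, j, ⟨?_, ?_, ?_⟩, hK, hL⟩
    · refine ⟨fun X Y _ _ _ _ k hk m => ?_⟩
      obtain ⟨a, ha⟩ := hE.out k hk ((LinearMap.fst R E F).comp m)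
      obtain ⟨b, hb⟩ := hF.out k hk ((LinearMap.snd R E F).comp m)
      exact ⟨a.prod b, fun x => Prod.ext (ha x) (hb x)⟩
    · obtain ⟨y, hy⟩ := hq (g b)
      obtain ⟨x, hx⟩ := key y b hy
      exact ⟨(x, y), hx⟩
    · intro x x' hxx
      exact Subtype.ext (congrArg (fun z : LinearMap.ker s => z.1.1) hxx)
    · rintro ⟨y, hy⟩
      obtain ⟨x, hx⟩ := key y 0 (by rw [LinearMap.mem_ker.mp hy, map_zero])
      exact ⟨⟨(x, y), hx⟩, rfl⟩
    · rintro ⟨⟨x, y⟩, hxy⟩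
      constructor
      · intro hy
        obtain rfl : y = 0 := congrArg Subtype.val hy
        refine ⟨⟨x, h.1 ?_⟩, rfl⟩
        rw [LinearMap.mem_ker, hs, map_zero, add_zero] at hxy
        rw [hxy, map_zero]
      · rintro ⟨x', hx'⟩
        rw [← hx']
        rfl

lemma GorensteinWeakInjective.of_retract {M G : ModuleCat.{u} R}
    (hG : GorensteinWeakInjective R G) (f : M →ₗ[R] G) (r : G →ₗ[R] M)
    (hr : r.comp f = LinearMap.id) : GorensteinWeakInjective R M := by
  refine GorensteinWeakInjective.of_class (fun M => ∃ (G : ModuleCat.{u} R) (f : M →ₗ[R] G)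
    (r : G →ₗ[R] M), r.comp f = LinearMap.id ∧ GorensteinWeakInjective R G) ?_ ?_ ⟨G, f, r, hr, hG⟩
  · rintro M ⟨G, f, r, hr, hG⟩
    exact hG.acyclic.of_retract f r hr
  · rintro M ⟨G, f, r, hr, hG⟩
    replace hr : ∀ m, r (f m) = m := LinearMap.congr_fun hr
    obtain ⟨E, p, hE, hp, hK⟩ := hG.exists_cover
    let K := LinearMap.ker (r.comp p)
    let i : LinearMap.ker p →ₗ[R] K × M := (LinearMap.inl R K M).comp
      ((LinearMap.ker p).subtype.codRestrict K fun x => by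
        change r (p x.1) = 0
        rw [LinearMap.mem_ker.mp x.2, map_zero])
    let s : K × M →ₗ[R] G := (p.comp K.subtype).coprod f
    have hs : ∀ x m, s (x, m) = p x.1 + f m := fun x m => LinearMap.coprod_apply _ _ _
    refine ⟨E, r.comp p, hE, (Function.LeftInverse.surjective hr).comp hp,
      ModuleCat.of R (K × M), LinearMap.inl R K M, LinearMap.fst R K M,
      LinearMap.fst_comp_inl R K M,
      GorensteinWeakInjective.of_shortExactSeq (f := i) (g := s) ⟨?_, ?_, ?_⟩ hK hG⟩
    · intro x x' hxx
      exact Subtype.ext (congrArg (fun z : K × M => z.1.1) hxx)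
    · intro y
      obtain ⟨x, hx⟩ := hp (y - f (r y))
      refine ⟨(⟨x, ?_⟩, r y), ?_⟩
      · change r (p x) = 0
        rw [hx, map_sub, hr, sub_self]
      · rw [hs, hx, sub_add_cancel]
    · rintro ⟨⟨x, hx⟩, m⟩
      replace hx : r (p x) = 0 := hx
      rw [hs]
      constructor
      · intro h
        obtain rfl : m = 0 := by
          have := congrArg r h
          rwa [map_add, hx, hr, zero_add, map_zero] at this
        rw [map_zero, add_zero] at h
        exact ⟨⟨x, h⟩, rfl⟩
      · rintro ⟨x', hx'⟩
        obtain rfl : x'.1 = x := congrArg (fun z : K × M => z.1.1) hx'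
        obtain rfl : 0 = m := congrArg Prod.snd hx'
        change p x'.1 + f 0 = 0
        rw [LinearMap.mem_ker.mp x'.2, map_zero, add_zero]

variable (R) in
/-- The modules `L` with `Ext^i_R(L, X) = 0` for all `i ≥ 1` and all Gorenstein weak injective
modules `X`. -/
def GWIOrthogonal (L : ModuleCat.{u} R) : Prop :=
  ∀ X : ModuleCat.{u} R, GorensteinWeakInjective R X →
    ∀ n : ℕ, Subsingleton (Abelian.Ext L X (n + 1))

lemma GWIOrthogonal.of_injective {E : ModuleCat.{u} R} (hE : Module.Injective R E) :
    GWIOrthogonal R E :=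
  fun _ hX n => hX.acyclic E (.of_injective hE) n

lemma ShortExactSeq.gwiCopureExact {A B C : ModuleCat.{u} R} {f : A →ₗ[R] B} {g : B →ₗ[R] C}
    (h : ShortExactSeq R A B C f g) (hC : GWIOrthogonal R C) : GWICopureExact R f g := by
  refine ⟨h, fun X hX => ⟨fun k k' hk => ?_, fun k => ⟨fun hk => ?_, ?_⟩,
    h.exists_extend X (hC X hX 0)⟩⟩
  · exact (LinearMap.cancel_right h.2.1).mp hk
  · have hker : LinearMap.ker g ≤ LinearMap.ker k := fun b hb => by
      obtain ⟨a, rfl⟩ := (h.2.2 b).mp hb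
      exact LinearMap.congr_fun hk a
    refine ⟨((LinearMap.ker g).liftQ k hker).comp
      (g.quotKerEquivOfSurjective h.2.1).symm.toLinearMap, LinearMap.ext fun b => ?_⟩
    have : (g.quotKerEquivOfSurjective h.2.1).symm (g b) = Submodule.Quotient.mk b := by
      rw [LinearEquiv.symm_apply_eq]
      rfl
    change (LinearMap.ker g).liftQ k hker ((g.quotKerEquivOfSurjective h.2.1).symm (g b)) = k b
    rw [this]
    rfl
  · rintro ⟨l, rfl⟩
    change (l.comp g).comp f = 0
    rw [LinearMap.comp_assoc, h.comp_eq_zero, LinearMap.comp_zero]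

/-- A Gorenstein weak injective coresolution can be replaced by an embedding into a Gorenstein
weak injective module with orthogonal cokernel, one step at a time. -/
lemma exists_gwi_embedding_of_shortExactSeq {M G₀ C G₁ L : ModuleCat.{u} R} {ε : M →ₗ[R] G₀}
    {c : G₀ →ₗ[R] C} (hε : ShortExactSeq R M G₀ C ε c) (hG₀ : GorensteinWeakInjective R G₀)
    {φ : C →ₗ[R] G₁} {ψ : G₁ →ₗ[R] L} (hφ : ShortExactSeq R C G₁ L φ ψ)
    (hG₁ : GorensteinWeakInjective R G₁) (hL : GWIOrthogonal R L) :
    ∃ (Q P : ModuleCat.{u} R) (f : M →ₗ[R] Q) (g : Q →ₗ[R] P),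
      GorensteinWeakInjective R Q ∧ GWIOrthogonal R P ∧ ShortExactSeq R M Q P f g := by
  obtain ⟨E, p, hE, hp, hK⟩ := hG₁.exists_cover
  let P := LinearMap.ker (ψ.comp p)
  have hP : GWIOrthogonal R (ModuleCat.of R P) := fun X hX n =>
    ShortExactSeq.ext_contra_left (f := P.subtype) (g := ψ.comp p)
      ⟨Subtype.val_injective, hφ.2.1.comp hp, LinearMap.exact_subtype_ker_map _⟩ X _
      (GWIOrthogonal.of_injective hE X hX n) (hL X hX (n + 1))
  let Q : Submodule R (G₀ × E) := LinearMap.eqLocus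
    ((φ.comp c).comp (LinearMap.fst R G₀ E)) (p.comp (LinearMap.snd R G₀ E))
  have hQ : ∀ z : Q, φ (c z.1.1) = p z.1.2 := fun z => z.2
  let i : LinearMap.ker p →ₗ[R] Q :=
    ((LinearMap.inr R G₀ E).comp (LinearMap.ker p).subtype).codRestrict Q fun x => by
      change φ (c 0) = p x.1
      rw [LinearMap.mem_ker.mp x.2, map_zero, map_zero]
  have hi : ShortExactSeq R (ModuleCat.of R (LinearMap.ker p)) (ModuleCat.of R Q) G₀ i
      ((LinearMap.fst R G₀ E).comp Q.subtype) := by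
    refine ⟨fun x x' hxx => ?_, fun y => ?_, fun z => ⟨fun hz => ?_, ?_⟩⟩
    · exact Subtype.ext (congrArg (fun z : Q => z.1.2) hxx)
    · obtain ⟨x, hx⟩ := hp (φ (c y))
      exact ⟨⟨(y, x), hx.symm⟩, rfl⟩
    · replace hz : z.1.1 = 0 := hz
      refine ⟨⟨z.1.2, ?_⟩, Subtype.ext (Prod.ext hz.symm rfl)⟩
      rw [LinearMap.mem_ker, ← hQ, hz, map_zero, map_zero]
    · rintro ⟨x, rfl⟩
      rfl
  let f : M →ₗ[R] Q := ((LinearMap.inl R G₀ E).comp ε).codRestrict Q fun m => by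
    change φ (c (ε m)) = p 0
    rw [hε.2.2.apply_apply_eq_zero, map_zero, map_zero]
  let g : Q →ₗ[R] P := ((LinearMap.snd R G₀ E).comp Q.subtype).codRestrict P fun z => by
    change ψ (p z.1.2) = 0
    rw [← hQ, hφ.2.2.apply_apply_eq_zero]
  refine ⟨ModuleCat.of R Q, ModuleCat.of R P, f, g, .of_shortExactSeq hi hK hG₀, hP,
    fun m m' hm => ?_, ?_, fun z => ⟨fun hz => ?_, ?_⟩⟩
  · exact hε.1 (congrArg (fun z : Q => z.1.1) hm)
  · rintro ⟨x, hx⟩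
    obtain ⟨y, hy⟩ := (hφ.2.2 (p x)).mp hx
    obtain ⟨w, rfl⟩ := hε.2.1 y
    exact ⟨⟨(w, x), hy⟩, rfl⟩
  · replace hz : z.1.2 = 0 := congrArg Subtype.val hz
    obtain ⟨m, hm⟩ := (hε.2.2 z.1.1).mp (hφ.1 (by rw [hQ, hz, map_zero, map_zero]))
    exact ⟨m, Subtype.ext (Prod.ext hm hz.symm)⟩
  · rintro ⟨m, rfl⟩
    rfl

lemma GwidLE.exists_gwi_embedding {k : ℕ} {M : ModuleCat.{u} R} (h : GwidLE R M k) :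
    ∃ (G L : ModuleCat.{u} R) (f : M →ₗ[R] G) (g : G →ₗ[R] L),
      GorensteinWeakInjective R G ∧ GWIOrthogonal R L ∧ ShortExactSeq R M G L f g := by
  induction k generalizing M with
  | zero =>
    obtain ⟨G, d, ε, ⟨hε, hεd, -, hz⟩, hG⟩ := h
    have hε' : Function.Surjective ε := fun x => (hεd x).mp (hz 1 one_pos _)
    refine ⟨G 0, ModuleCat.of R PUnit, ε, 0, hG 0, .of_injective ⟨?_⟩, hε,
      fun x => ⟨0, Subsingleton.elim _ _⟩, fun x => ⟨fun _ => hε' x, fun _ => rfl⟩⟩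
    exact fun _ _ _ _ _ _ _ _ _ => ⟨0, fun _ => Subsingleton.elim _ _⟩
  | succ k ih =>
    obtain ⟨G, d, ε, ⟨hε, hεd, hd, hz⟩, hG⟩ := h
    have hC : GwidLE R (ModuleCat.of R (LinearMap.range (d 0))) k := by
      refine ⟨fun i => G (i + 1), fun i => d (i + 1), (LinearMap.range (d 0)).subtype,
        ⟨Subtype.val_injective, fun x => (hd 0 x).trans ?_, fun i => hd (i + 1),
          fun i hi => hz (i + 1) (by omega)⟩, fun i => hG (i + 1)⟩
      exact ⟨fun hx => ⟨⟨x, hx⟩, rfl⟩, fun ⟨y, hy⟩ => hy ▸ y.2⟩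
    obtain ⟨G₁, L, φ, ψ, hG₁, hL, hφ⟩ := ih hC
    refine exists_gwi_embedding_of_shortExactSeq (c := (d 0).rangeRestrict)
      ⟨hε, LinearMap.surjective_rangeRestrict _, fun x => ?_⟩ (hG 0) hφ hG₁ hL
    rw [← hεd x, ← LinearMap.mem_ker, LinearMap.ker_rangeRestrict, LinearMap.mem_ker]

end ExtLemmas

/-- For `M` of finite Gorenstein weak injective dimension: `M` is Gorenstein weak
injective iff every `GWI`-copure exact sequence `0 → M → N → L → 0` splits, iff
`Hom_R(-, M)` is exact on every `GWI`-copure exact sequence. -/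
theorem gorensteinWeakInjective_iff_copure (M : ModuleCat.{u} R)
    (hfin : ∃ k : ℕ, GwidLE R M k) :
    (GorensteinWeakInjective R M ↔
      ∀ (N L : ModuleCat.{u} R) (f : M →ₗ[R] N) (g : N →ₗ[R] L),
        GWICopureExact R f g → ∃ r : N →ₗ[R] M, r.comp f = LinearMap.id) ∧
    (GorensteinWeakInjective R M ↔
      ∀ (A B C : ModuleCat.{u} R) (f : A →ₗ[R] B) (g : B →ₗ[R] C),
        GWICopureExact R f g → HomContraExact R M f g) := by
  have hsplit : (∀ (N L : ModuleCat.{u} R) (f : M →ₗ[R] N) (g : N →ₗ[R] L),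
      GWICopureExact R f g → ∃ r : N →ₗ[R] M, r.comp f = LinearMap.id) →
      GorensteinWeakInjective R M := fun h => by
    obtain ⟨k, hk⟩ := hfin
    obtain ⟨G, L, f, g, hG, hL, hs⟩ := hk.exists_gwi_embedding
    obtain ⟨r, hr⟩ := h G L f g (hs.gwiCopureExact hL)
    exact hG.of_retract f r hr
  refine ⟨⟨fun hM N L f g h => (h.2 M hM).2.2 LinearMap.id, hsplit⟩,
    fun hM A B C f g h => h.2 M hM, fun h => hsplit fun N L f g hfg => ?_⟩
  exact (h M N L f g hfg).2.2 LinearMap.id
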